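/- Let ρ ∈ C_c^∞(ℝ⁴) be nonnegative, radial, supported in (−1,1)⁴, with ∫ρ = 1, set ρ_ε(x) = ε^{-4} ρ(x/ε), and let G_ε = ρ_ε ⋆ G be the mollified Green's function of (1 − Δ) on 𝕋⁴. Then there is a constant C > 0 such that |G_ε(x)| ≤ C/(|x|² + ε²) for all x ∈ 𝕋⁴ and ε ∈ (0,1). -/

import Mathlib

open MeasureTheory Real

noncomputable section

/-- The Euclidean norm on `Fin 4 → ℝ` (we work with periodic functions on `ℝ⁴`
representing functions on the torus `𝕋⁴ = (ℝ/2πℤ)⁴`). -/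
def enorm4 (x : Fin 4 → ℝ) : ℝ := Real.sqrt (∑ i, (x i) ^ 2)

/-- A point of the lattice `(2πℤ)⁴`. -/
def lpt (k : Fin 4 → ℤ) : Fin 4 → ℝ := fun i => 2 * Real.pi * (k i)

/-- Geodesic distance of (the torus point represented by) `x` to `0`,
i.e. the Euclidean distance of `x` to the lattice `(2πℤ)⁴`. -/
def latDist (x : Fin 4 → ℝ) : ℝ := ⨅ k : Fin 4 → ℤ, enorm4 (x - lpt k)

/-- The set of points representing `𝕋⁴ \ {0}`. -/
def Sreg : Set (Fin 4 → ℝ) := {x | ∀ k : Fin 4 → ℤ, x ≠ lpt k}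

/-- A fundamental domain `(-π, π]⁴` for the torus. -/
def FD : Set (Fin 4 → ℝ) := {x | ∀ i, x i ∈ Set.Ioc (-Real.pi) Real.pi}

/-- `(2πℤ)⁴`-periodicity, i.e. `f` represents a function on `𝕋⁴`. -/
def Per (f : (Fin 4 → ℝ) → ℝ) : Prop :=
  ∀ (x : Fin 4 → ℝ) (k : Fin 4 → ℤ), f (x + lpt k) = f x

/-- The Laplacian of `φ`. -/
def lap (φ : (Fin 4 → ℝ) → ℝ) (x : Fin 4 → ℝ) : ℝ :=
  ∑ i, fderiv ℝ (fun y => fderiv ℝ φ y (Pi.single i 1)) x (Pi.single i 1)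


/-- The rescaled mollifier `ρ_ε(x) = ε^{-4} ρ(x/ε)`. -/
def moll (ρ : (Fin 4 → ℝ) → ℝ) (ε : ℝ) (x : Fin 4 → ℝ) : ℝ :=
  ε⁻¹ ^ 4 * ρ (fun i => x i / ε)

/-- The mollified Green's function `G_ε = ρ_ε ⋆ G`. -/
def Geps (g ρ : (Fin 4 → ℝ) → ℝ) (ε : ℝ) (x : Fin 4 → ℝ) : ℝ :=
  ∫ y : Fin 4 → ℝ, moll ρ ε y * g (x - y)

/-!
Since `|ρ_ε| ≤ M ε⁻⁴` on the ball of radius `ε`, `|G_ε(x)|` is at most a constant times the average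
of `|G|` over the `ε`-ball around `x`. The expansion gives `|G| ≤ A / dist(·, lattice)²`, and if `c`
is a lattice point nearest to `x`, then on this ball the distance to the lattice is comparable to
the distance to `c` alone. It remains to bound, in dimension `d > p`, the average of
`‖z - c‖ ^ (-p)` over the `r`-ball around `x` by a multiple of `(r + ‖x - c‖) ^ (-p)`: if
`‖x - c‖ ≥ 2r` the integrand is at most a multiple of this value, and otherwise the ball lies in the
`3r`-ball around `c`, where the integral is computed by scaling.
-/

open Set Metric Module

section RieszPotential

variable {E : Type*} [NormedAddCommGroup E] [NormedSpace ℝ E] [FiniteDimensional ℝ E]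
  [MeasurableSpace E] [BorelSpace E] (μ : Measure E) [μ.IsAddHaarMeasure] {p r : ℝ}

lemma integrableOn_norm_rpow_neg_of_isBounded [Nontrivial E] (hp : p < finrank ℝ E) {s : Set E}
    (hs : Bornology.IsBounded s) : IntegrableOn (fun z : E => ‖z‖ ^ (-p)) s μ := by
  obtain ⟨R, hR, hsR⟩ := hs.subset_ball_lt 0 0
  refine IntegrableOn.mono_set ?_ hsR
  rw [integrableOn_fun_norm_addHaar μ (f := fun t => t ^ (-p))]
  have hradial : IntegrableOn (fun t : ℝ => t ^ ((finrank ℝ E : ℝ) - 1 - p)) (Ioo 0 R) :=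
    (intervalIntegral.integrableOn_Ioo_rpow_iff hR).2 (by linarith)
  refine hradial.congr_fun (fun t ht => ?_) measurableSet_Ioo
  have hdim : ((finrank ℝ E - 1 : ℕ) : ℝ) = finrank ℝ E - 1 := by
    rw [Nat.cast_sub finrank_pos, Nat.cast_one]
  change _ = t ^ (finrank ℝ E - 1) * t ^ (-p)
  rw [← rpow_natCast, hdim, ← rpow_add ht.1, sub_eq_add_neg _ p]

lemma setIntegral_closedBall_zero_norm_rpow_neg (hr : 0 < r) :
    ∫ z in closedBall (0 : E) r, ‖z‖ ^ (-p) ∂μ =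
      r ^ finrank ℝ E * r ^ (-p) * ∫ z in closedBall (0 : E) 1, ‖z‖ ^ (-p) ∂μ := by
  have hscale := Measure.setIntegral_comp_smul_of_pos μ (fun z : E => ‖z‖ ^ (-p))
    (closedBall 0 1) hr
  simp only [norm_smul, norm_of_nonneg hr.le, mul_rpow hr.le (norm_nonneg _),
    integral_const_mul, smul_unitClosedBall_of_nonneg hr.le, smul_eq_mul] at hscale
  rw [mul_assoc, hscale, mul_inv_cancel_left₀ (by positivity)]

lemma setIntegral_closedBall_norm_rpow_neg_le_of_norm_le [Nontrivial E] (hp₀ : 0 ≤ p)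
    (hp : p < finrank ℝ E) (hr : 0 < r) {x : E} (hx : ‖x‖ ≤ 2 * r) :
    ∫ z in closedBall x r, ‖z‖ ^ (-p) ∂μ ≤
      3 ^ finrank ℝ E * (∫ z in closedBall (0 : E) 1, ‖z‖ ^ (-p) ∂μ) *
        r ^ finrank ℝ E * (r + ‖x‖) ^ (-p) := by
  have : 0 ≤ ∫ z in closedBall (0 : E) 1, ‖z‖ ^ (-p) ∂μ :=
    integral_nonneg fun z => by positivity
  have hsub : closedBall x r ⊆ closedBall 0 (3 * r) :=
    closedBall_subset_closedBall' (by rw [dist_zero_right]; linarith)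
  calc ∫ z in closedBall x r, ‖z‖ ^ (-p) ∂μ
      ≤ ∫ z in closedBall 0 (3 * r), ‖z‖ ^ (-p) ∂μ :=
        setIntegral_mono_set (integrableOn_norm_rpow_neg_of_isBounded μ hp isBounded_closedBall)
          (.of_forall fun z => by positivity) hsub.eventuallyLE
    _ = (3 * r) ^ finrank ℝ E * (3 * r) ^ (-p) * ∫ z in closedBall (0 : E) 1, ‖z‖ ^ (-p) ∂μ :=
        setIntegral_closedBall_zero_norm_rpow_neg μ (by positivity)
    _ ≤ (3 * r) ^ finrank ℝ E * (r + ‖x‖) ^ (-p) *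
          ∫ z in closedBall (0 : E) 1, ‖z‖ ^ (-p) ∂μ := by
        gcongr ?_ * ?_ * _
        exact rpow_le_rpow_of_nonpos (by positivity) (by linarith) (by linarith)
    _ = _ := by ring

lemma setIntegral_closedBall_norm_rpow_neg_le_of_le_norm (hp₀ : 0 ≤ p) (hr : 0 < r) {x : E}
    (hx : 2 * r ≤ ‖x‖) :
    ∫ z in closedBall x r, ‖z‖ ^ (-p) ∂μ ≤
      3 ^ p * μ.real (ball 0 1) * r ^ finrank ℝ E * (r + ‖x‖) ^ (-p) := by
  have hbound : ∀ z ∈ closedBall x r, ‖‖z‖ ^ (-p)‖ ≤ 3 ^ p * (r + ‖x‖) ^ (-p) := by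
    intro z hz
    have hxz : ‖x‖ ≤ ‖z‖ + r := by
      rw [mem_closedBall_iff_norm'] at hz
      linarith [norm_le_norm_add_norm_sub' x z]
    rw [norm_of_nonneg (by positivity)]
    calc ‖z‖ ^ (-p) ≤ ((r + ‖x‖) / 3) ^ (-p) :=
          rpow_le_rpow_of_nonpos (by positivity) (by linarith) (by linarith)
      _ = 3 ^ p * (r + ‖x‖) ^ (-p) := by
          rw [div_rpow (by positivity) (by norm_num), rpow_neg (by norm_num : (0 : ℝ) ≤ 3),
            div_inv_eq_mul, mul_comm]
  calc ∫ z in closedBall x r, ‖z‖ ^ (-p) ∂μ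
      ≤ 3 ^ p * (r + ‖x‖) ^ (-p) * μ.real (closedBall x r) :=
        (le_norm_self _).trans
          (norm_setIntegral_le_of_norm_le_const measure_closedBall_lt_top hbound)
    _ = _ := by rw [Measure.addHaar_real_closedBall μ x hr.le]; ring

lemma exists_setIntegral_closedBall_norm_rpow_neg_le [Nontrivial E] (hp₀ : 0 ≤ p)
    (hp : p < finrank ℝ E) :
    ∃ C ≥ 0, ∀ r > 0, ∀ x : E,
      ∫ z in closedBall x r, ‖z‖ ^ (-p) ∂μ ≤ C * r ^ finrank ℝ E * (r + ‖x‖) ^ (-p) := by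
  refine ⟨max (3 ^ finrank ℝ E * ∫ z in closedBall (0 : E) 1, ‖z‖ ^ (-p) ∂μ)
    (3 ^ p * μ.real (ball 0 1)), le_max_of_le_right (by positivity), fun r hr x => ?_⟩
  rcases le_total ‖x‖ (2 * r) with hx | hx
  · refine (setIntegral_closedBall_norm_rpow_neg_le_of_norm_le μ hp₀ hp hr hx).trans ?_
    gcongr
    exact le_max_left _ _
  · refine (setIntegral_closedBall_norm_rpow_neg_le_of_le_norm μ hp₀ hr hx).trans ?_
    gcongr
    exact le_max_right _ _

lemma exists_setIntegral_closedBall_norm_sub_rpow_neg_le [Nontrivial E] (hp₀ : 0 ≤ p)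
    (hp : p < finrank ℝ E) :
    ∃ C ≥ 0, ∀ r > 0, ∀ x c : E, IntegrableOn (fun z => ‖z - c‖ ^ (-p)) (closedBall x r) μ ∧
      ∫ z in closedBall x r, ‖z - c‖ ^ (-p) ∂μ ≤
        C * r ^ finrank ℝ E * (r + ‖x - c‖) ^ (-p) := by
  obtain ⟨C, hC₀, hC⟩ := exists_setIntegral_closedBall_norm_rpow_neg_le μ hp₀ hp
  refine ⟨C, hC₀, fun r hr x c => ?_⟩
  have hball : (· - c) ⁻¹' closedBall (x - c) r = closedBall x r := by
    ext z
    simp only [mem_preimage, mem_closedBall, dist_sub_right]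
  have htrans := measurePreserving_sub_right μ c
  have hemb := (MeasurableEquiv.subRight c).measurableEmbedding
  rw [← hball]
  exact ⟨(htrans.integrableOn_comp_preimage hemb).2
      (integrableOn_norm_rpow_neg_of_isBounded μ hp isBounded_closedBall),
    (htrans.setIntegral_preimage_emb hemb (fun z => ‖z‖ ^ (-p)) _).trans_le (hC r hr _)⟩

end RieszPotential

section BallAverage

variable {E : Type*} [SeminormedAddCommGroup E] [MeasurableSpace E] [BorelSpace E]
  {μ : Measure E} [μ.IsAddLeftInvariant] [μ.IsNegInvariant] {k g : E → ℝ} {K r : ℝ} {x : E}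

lemma integrable_mul_comp_sub_left [SecondCountableTopology E] [SFinite μ]
    (hk : AEStronglyMeasurable k μ) (hkK : ∀ y, |k y| ≤ K)
    (hkr : Function.support k ⊆ closedBall 0 r) (hg : IntegrableOn g (closedBall x r) μ) :
    Integrable (fun y => k y * g (x - y)) μ := by
  have hsupp : Function.support (fun z => k (x - z) * g z) ⊆ closedBall x r := fun z hz => by
    have := hkr (left_ne_zero_of_mul hz)
    rwa [mem_closedBall_zero_iff, ← mem_closedBall_iff_norm'] at this
  have hint : Integrable (fun z => k (x - z) * g z) μ := by
    rw [← integrableOn_iff_integrable_of_support_subset hsupp]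
    exact hg.bdd_mul (hk.comp_quasiMeasurePreserving
      (quasiMeasurePreserving_sub_left_of_right_invariant μ x)).restrict
      (.of_forall fun z => hkK _)
  simpa only [sub_sub_cancel] using hint.comp_sub_left x

lemma abs_integral_mul_comp_sub_left_le (hkK : ∀ y, |k y| ≤ K)
    (hkr : Function.support k ⊆ closedBall 0 r) (hg : IntegrableOn g (closedBall x r) μ) :
    |∫ y, k y * g (x - y) ∂μ| ≤ K * ∫ z in closedBall x r, |g z| ∂μ := by
  have hzero : ∀ z, z ∉ closedBall x r → k (x - z) * g z = 0 := fun z hz => by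
    rw [Function.support_subset_iff'.1 hkr, zero_mul]
    rwa [mem_closedBall_zero_iff, ← mem_closedBall_iff_norm']
  calc |∫ y, k y * g (x - y) ∂μ| = |∫ z in closedBall x r, k (x - z) * g z ∂μ| := by
        rw [setIntegral_eq_integral_of_forall_compl_eq_zero hzero,
          ← integral_sub_left_eq_self _ μ x]
        simp only [sub_sub_cancel]
    _ ≤ ∫ z in closedBall x r, K * |g z| ∂μ := by
        rw [← norm_eq_abs]
        refine norm_integral_le_of_norm_le (hg.abs.const_mul K) (.of_forall fun z => ?_)
        rw [norm_mul]
        exact mul_le_mul_of_nonneg_right (hkK _) (abs_nonneg _)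
    _ = K * ∫ z in closedBall x r, |g z| ∂μ := integral_const_mul _ _

end BallAverage

section Torus

lemma norm_le_enorm4 (x : Fin 4 → ℝ) : ‖x‖ ≤ enorm4 x :=
  (pi_norm_le_iff_of_nonneg (sqrt_nonneg _)).2 fun i => abs_le_sqrt <|
    Finset.single_le_sum (f := fun j => x j ^ 2) (fun _ _ => sq_nonneg _) (Finset.mem_univ i)

lemma enorm4_le_two_mul_norm (x : Fin 4 → ℝ) : enorm4 x ≤ 2 * ‖x‖ := by
  refine sqrt_le_iff.2 ⟨by positivity, ?_⟩
  calc ∑ i, x i ^ 2 ≤ ∑ _i : Fin 4, ‖x‖ ^ 2 :=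
        Finset.sum_le_sum fun i _ => sq_le_sq.2 (by simpa using norm_le_pi_norm x i)
    _ = (2 * ‖x‖) ^ 2 := by rw [Finset.sum_const, Finset.card_univ, Fintype.card_fin]; ring

lemma lpt_add (j k : Fin 4 → ℤ) : lpt (j + k) = lpt j + lpt k := by
  ext i
  simp [lpt, mul_add]

lemma two_pi_le_norm_lpt {k : Fin 4 → ℤ} (hk : k ≠ 0) : 2 * π ≤ ‖lpt k‖ := by
  obtain ⟨i, hi⟩ := Function.ne_iff.1 hk
  have hki : (1 : ℝ) ≤ |(k i : ℝ)| := by exact_mod_cast Int.one_le_abs hi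
  calc 2 * π ≤ 2 * π * |(k i : ℝ)| := le_mul_of_one_le_right (by positivity) hki
    _ = ‖lpt k i‖ := by simp [lpt, abs_of_pos pi_pos]
    _ ≤ ‖lpt k‖ := norm_le_pi_norm _ i

lemma exists_norm_sub_lpt_le_pi (x : Fin 4 → ℝ) : ∃ k, ‖x - lpt k‖ ≤ π := by
  refine ⟨fun i => round (x i / (2 * π)), (pi_norm_le_iff_of_nonneg pi_pos.le).2 fun i => ?_⟩
  have hround := abs_sub_round (x i / (2 * π))
  calc ‖x i - 2 * π * round (x i / (2 * π))‖
      = 2 * π * |x i / (2 * π) - round (x i / (2 * π))| := by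
        rw [norm_eq_abs, ← abs_of_pos two_pi_pos, ← abs_mul, abs_of_pos two_pi_pos, mul_sub,
          mul_div_cancel₀ _ two_pi_pos.ne']
    _ ≤ π := by nlinarith [pi_pos]

lemma latDist_le_enorm4_sub_lpt (x : Fin 4 → ℝ) (k : Fin 4 → ℤ) :
    latDist x ≤ enorm4 (x - lpt k) :=
  ciInf_le ⟨0, by rintro _ ⟨k, rfl⟩; exact sqrt_nonneg _⟩ k

lemma latDist_le_two_mul_norm_sub_lpt (x : Fin 4 → ℝ) (k : Fin 4 → ℤ) :
    latDist x ≤ 2 * ‖x - lpt k‖ :=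
  (latDist_le_enorm4_sub_lpt x k).trans (enorm4_le_two_mul_norm _)

lemma latDist_nonneg (x : Fin 4 → ℝ) : 0 ≤ latDist x :=
  le_ciInf fun _ => sqrt_nonneg _

lemma latDist_le_two_pi (x : Fin 4 → ℝ) : latDist x ≤ 2 * π := by
  obtain ⟨k, hk⟩ := exists_norm_sub_lpt_le_pi x
  linarith [latDist_le_two_mul_norm_sub_lpt x k]

-- Below `4π/3` every lattice point but `c = lpt k` is at distance `≥ 2π - 4π/3 = (4π/3) / 2` from
-- `x`; the bound leaves room for `‖x - c‖ ≤ π + 1`, as `π ≥ 3`.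
lemma norm_sub_lpt_le_two_mul_latDist {x : Fin 4 → ℝ} {k : Fin 4 → ℤ}
    (hx : ‖x - lpt k‖ ≤ 4 * π / 3) : ‖x - lpt k‖ ≤ 2 * latDist x := by
  suffices ‖x - lpt k‖ / 2 ≤ latDist x by linarith
  refine le_ciInf fun j => le_trans ?_ (norm_le_enorm4 _)
  rcases eq_or_ne j k with rfl | hjk
  · linarith [norm_nonneg (x - lpt j)]
  · have hsub : lpt (j - k) = (x - lpt k) - (x - lpt j) := by
      rw [sub_sub_sub_cancel_left, eq_sub_iff_add_eq, ← lpt_add, sub_add_cancel]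
    have hsep := two_pi_le_norm_lpt (sub_ne_zero.2 hjk)
    rw [hsub] at hsep
    linarith [norm_sub_le (x - lpt k) (x - lpt j)]

lemma latDist_pos {x : Fin 4 → ℝ} (hx : x ∈ Sreg) : 0 < latDist x := by
  obtain ⟨k, hk⟩ := exists_norm_sub_lpt_le_pi x
  have hpos : 0 < ‖x - lpt k‖ := norm_sub_pos_iff.2 (hx k)
  linarith [norm_sub_lpt_le_two_mul_latDist (hk.trans (by linarith [pi_pos]))]

lemma ae_mem_sreg : ∀ᵐ x : Fin 4 → ℝ, x ∈ Sreg := by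
  filter_upwards [(countable_range lpt).ae_notMem volume] with x hx k hk
  exact hx ⟨k, hk.symm⟩

end Torus

section SingularFunction

variable {g : (Fin 4 → ℝ) → ℝ} {A : ℝ}

lemma abs_log_le_add_inv {t : ℝ} (ht : 0 < t) : |log t| ≤ t + t⁻¹ := by
  have hinv := log_le_sub_one_of_pos (inv_pos.2 ht)
  rw [log_inv] at hinv
  have := inv_pos.2 ht
  exact abs_le.2 ⟨by linarith, by linarith [log_le_sub_one_of_pos ht]⟩

lemma exists_latDist_sq_mul_abs_le_of_expansion {a b C₀ : ℝ}
    (hexp : ∀ x ∈ Sreg, |g x - 1 / (a * latDist x ^ 2) - b * log (latDist x)| ≤ C₀) :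
    ∃ A, ∀ x ∈ Sreg, latDist x ^ 2 * |g x| ≤ A := by
  refine ⟨|1 / a| + |b| * ((2 * π) ^ 3 + 2 * π) + |C₀| * (2 * π) ^ 2, fun x hx => ?_⟩
  have hd := latDist_pos hx
  have hdπ := latDist_le_two_pi x
  have hremainder := (hexp x hx).trans (le_abs_self C₀)
  set d := latDist x
  have hlead : |1 / (a * d ^ 2)| = |1 / a| / d ^ 2 := by
    rw [← div_div, abs_div, abs_of_pos (pow_pos hd 2)]
  have hg : |g x| ≤ |1 / a| / d ^ 2 + |b| * (d + d⁻¹) + |C₀| := by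
    calc |g x| = |1 / (a * d ^ 2) + b * log d + (g x - 1 / (a * d ^ 2) - b * log d)| := by ring_nf
      _ ≤ |1 / (a * d ^ 2)| + |b * log d| + |g x - 1 / (a * d ^ 2) - b * log d| :=
          abs_add_three _ _ _
      _ ≤ _ := by
          rw [hlead, abs_mul b]
          gcongr
          exact abs_log_le_add_inv hd
  calc d ^ 2 * |g x| ≤ d ^ 2 * (|1 / a| / d ^ 2 + |b| * (d + d⁻¹) + |C₀|) := by gcongr
    _ = |1 / a| + |b| * (d ^ 3 + d) + |C₀| * d ^ 2 := by field_simp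
    _ ≤ _ := by gcongr

lemma abs_le_norm_sub_lpt_rpow {x : Fin 4 → ℝ} {k : Fin 4 → ℤ} (hxk : x ≠ lpt k)
    (hx : ‖x - lpt k‖ ≤ 4 * π / 3) (hg : latDist x ^ 2 * |g x| ≤ A) :
    |g x| ≤ 4 * A * ‖x - lpt k‖ ^ (-2 : ℝ) := by
  have hpos : 0 < ‖x - lpt k‖ := norm_sub_pos_iff.2 hxk
  have hdist := norm_sub_lpt_le_two_mul_latDist hx
  rw [rpow_neg (norm_nonneg _), rpow_two, ← div_eq_mul_inv, le_div_iff₀' (by positivity)]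
  calc ‖x - lpt k‖ ^ 2 * |g x| ≤ (2 * latDist x) ^ 2 * |g x| := by gcongr
    _ = 4 * (latDist x ^ 2 * |g x|) := by ring
    _ ≤ 4 * A := by gcongr

lemma exists_setIntegral_closedBall_abs_le (hgm : AEStronglyMeasurable g)
    (hg : ∀ᵐ x, latDist x ^ 2 * |g x| ≤ A) :
    ∃ C : ℝ, ∀ r ∈ Ioo (0 : ℝ) 1, ∀ x, IntegrableOn g (closedBall x r) ∧
      ∫ z in closedBall x r, |g z| ≤ C * r ^ 4 / (latDist x ^ 2 + r ^ 2) := by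
  obtain ⟨C, hC₀, hC⟩ := exists_setIntegral_closedBall_norm_sub_rpow_neg_le
    (volume : Measure (Fin 4 → ℝ)) (p := 2) (by norm_num) (by norm_num)
  simp only [finrank_fin_fun] at hC
  have hA : 0 ≤ A := by
    obtain ⟨z, hz⟩ := hg.exists
    exact le_trans (by positivity) hz
  refine ⟨4 * A * (4 * C), fun r ⟨hr₀, hr₁⟩ x => ?_⟩
  obtain ⟨k, hk⟩ := exists_norm_sub_lpt_le_pi x
  obtain ⟨hint, hle⟩ := hC r hr₀ x (lpt k)
  have hdom : ∀ᵐ z ∂volume.restrict (closedBall x r),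
      |g z| ≤ 4 * A * ‖z - lpt k‖ ^ (-2 : ℝ) := by
    filter_upwards [ae_restrict_mem measurableSet_closedBall, ae_restrict_of_ae hg,
      ae_restrict_of_ae ae_mem_sreg] with z hzx hz hzS
    refine abs_le_norm_sub_lpt_rpow (hzS k) ?_ hz
    rw [mem_closedBall_iff_norm] at hzx
    linarith [norm_sub_le_norm_sub_add_norm_sub z x (lpt k), pi_gt_three]
  have hgint : IntegrableOn g (closedBall x r) := (hint.const_mul _).mono' hgm.restrict hdom
  refine ⟨hgint, ?_⟩
  have hden : latDist x ^ 2 + r ^ 2 ≤ 4 * (r + ‖x - lpt k‖) ^ 2 := by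
    nlinarith [latDist_nonneg x, latDist_le_two_mul_norm_sub_lpt x k, norm_nonneg (x - lpt k)]
  calc ∫ z in closedBall x r, |g z|
      ≤ ∫ z in closedBall x r, 4 * A * ‖z - lpt k‖ ^ (-2 : ℝ) :=
        integral_mono_ae hgint.abs (hint.const_mul _) hdom
    _ ≤ 4 * A * (C * r ^ 4 * (r + ‖x - lpt k‖) ^ (-2 : ℝ)) := by
        rw [integral_const_mul]
        gcongr
    _ = 4 * A * (4 * C) * r ^ 4 / (4 * (r + ‖x - lpt k‖) ^ 2) := by
        rw [rpow_neg (by positivity), rpow_two]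
        field_simp
    _ ≤ 4 * A * (4 * C) * r ^ 4 / (latDist x ^ 2 + r ^ 2) := by gcongr

end SingularFunction

section Mollifier

variable {ρ : (Fin 4 → ℝ) → ℝ} {ε M : ℝ}

lemma moll_eq_smul (ρ : (Fin 4 → ℝ) → ℝ) (ε : ℝ) (x : Fin 4 → ℝ) :
    moll ρ ε x = ε⁻¹ ^ 4 * ρ (ε⁻¹ • x) := by
  simp only [moll, div_eq_inv_mul, Pi.smul_def, smul_eq_mul]

lemma abs_moll_le (hε : 0 < ε) (hρM : ∀ x, |ρ x| ≤ M) (x : Fin 4 → ℝ) :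
    |moll ρ ε x| ≤ ε⁻¹ ^ 4 * M := by
  rw [moll_eq_smul, abs_mul, abs_of_pos (by positivity)]
  gcongr
  exact hρM _

lemma support_moll_subset_closedBall (hε : 0 < ε) (hρ : Function.support ρ ⊆ closedBall 0 1) :
    Function.support (moll ρ ε) ⊆ closedBall 0 ε := fun x hx => by
  have hmem : ε⁻¹ • x ∈ closedBall (0 : Fin 4 → ℝ) 1 :=
    hρ fun h => hx (by rw [moll_eq_smul, h, mul_zero])
  rwa [mem_closedBall_zero_iff, norm_smul, norm_of_nonneg (by positivity),
    inv_mul_le_one₀ hε, ← mem_closedBall_zero_iff] at hmem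

lemma aestronglyMeasurable_moll (hε : 0 < ε) (hρ : AEStronglyMeasurable ρ) :
    AEStronglyMeasurable (moll ρ ε) := by
  simp only [funext (moll_eq_smul ρ ε)]
  exact (hρ.comp_quasiMeasurePreserving
    (Measure.quasiMeasurePreserving_smul volume (inv_ne_zero hε.ne'))).const_mul _

end Mollifier

theorem stmt9_general {g ρ : (Fin 4 → ℝ) → ℝ} {A M : ℝ} (hgm : AEStronglyMeasurable g)
    (hg : ∀ᵐ x, latDist x ^ 2 * |g x| ≤ A) (hρm : AEStronglyMeasurable ρ)
    (hρM : ∀ x, |ρ x| ≤ M) (hρsupp : Function.support ρ ⊆ closedBall 0 1) :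
    ∃ C : ℝ, 0 < C ∧ ∀ ε ∈ Ioo (0 : ℝ) 1, ∀ x : Fin 4 → ℝ,
      Integrable (fun y => moll ρ ε y * g (x - y)) ∧
        |Geps g ρ ε x| ≤ C / (latDist x ^ 2 + ε ^ 2) := by
  obtain ⟨C, hC⟩ := exists_setIntegral_closedBall_abs_le hgm hg
  refine ⟨max (M * C) 1, by positivity, fun ε hε x => ?_⟩
  have hε₀ : 0 < ε := hε.1
  have hM : 0 ≤ M := (abs_nonneg _).trans (hρM 0)
  obtain ⟨hgint, hgle⟩ := hC ε hε x
  have hmoll := abs_moll_le hε₀ hρM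
  have hsupp := support_moll_subset_closedBall hε₀ hρsupp
  refine ⟨integrable_mul_comp_sub_left (aestronglyMeasurable_moll hε₀ hρm) hmoll hsupp hgint, ?_⟩
  calc |Geps g ρ ε x| ≤ ε⁻¹ ^ 4 * M * ∫ z in closedBall x ε, |g z| :=
        abs_integral_mul_comp_sub_left_le hmoll hsupp hgint
    _ ≤ ε⁻¹ ^ 4 * M * (C * ε ^ 4 / (latDist x ^ 2 + ε ^ 2)) := by gcongr
    _ = M * C / (latDist x ^ 2 + ε ^ 2) := by field_simp
    _ ≤ max (M * C) 1 / (latDist x ^ 2 + ε ^ 2) := by gcongr; exact le_max_left _ _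

/-- Lemma `lem_greens_function_order_bound`, first bound: with `ρ ∈ C_c^∞` nonnegative,
radial, supported in `(-1,1)⁴`, `∫ρ = 1`, and `G` the Green's function of `(1-Δ)` on `𝕋⁴`
(given through its expansion `G(x) = 1/(4π²|x|²) + (1/(8π²))log|x| + O(1)`), the mollified
Green's function `G_ε = ρ_ε ⋆ G` satisfies `|G_ε(x)| ≤ C/(|x|² + ε²)` for all `x ∈ 𝕋⁴`
and `ε ∈ (0,1)`. -/
theorem stmt9 (g ρ : (Fin 4 → ℝ) → ℝ)
    (hper : Per g) (hloc : LocallyIntegrable g volume) (C₀ : ℝ)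
    (hexp : ∀ x ∈ Sreg,
      |g x - 1 / (4 * Real.pi ^ 2 * latDist x ^ 2)
          - (1 / (8 * Real.pi ^ 2)) * Real.log (latDist x)| ≤ C₀)
    (hρsmooth : ContDiff ℝ (⊤ : ℕ∞) ρ) (hρpos : ∀ x, 0 ≤ ρ x)
    (hρrad : ∀ x y, enorm4 x = enorm4 y → ρ x = ρ y)
    (hρsupp : ∀ x, ρ x ≠ 0 → ∀ i, |x i| < 1)
    (hρint : ∫ x : Fin 4 → ℝ, ρ x = 1) :
    ∃ C : ℝ, 0 < C ∧ ∀ ε ∈ Set.Ioo (0:ℝ) 1, ∀ x : Fin 4 → ℝ,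
      |Geps g ρ ε x| ≤ C / (latDist x ^ 2 + ε ^ 2) := by
  have hsupp : Function.support ρ ⊆ closedBall 0 1 := fun x hx =>
    mem_closedBall_zero_iff.2 <|
      (pi_norm_le_iff_of_nonneg zero_le_one).2 fun i => (hρsupp x hx i).le
  obtain ⟨M, hM⟩ := hρsmooth.continuous.bounded_above_of_compact_support <|
    HasCompactSupport.of_support_subset_isCompact (isCompact_closedBall 0 1) hsupp
  obtain ⟨A, hA⟩ := exists_latDist_sq_mul_abs_le_of_expansion hexp
  obtain ⟨C, hC₀, hC⟩ := stmt9_general hloc.aestronglyMeasurable (ae_mem_sreg.mono hA)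
    hρsmooth.continuous.aestronglyMeasurable hM hsupp
  exact ⟨C, hC₀, fun ε hε x => (hC ε hε x).2⟩

end
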